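/- arXiv:1402.0546 — 4 statements merged into one kernel-verified Lean document; each statement's English description precedes it below -/
import Mathlib

section
/- Let n ≥ 1 be an integer and let γ > 1. Let g : ℝ → ℝ be (n+1)-times continuously differentiable on (0,∞), bounded below by 1, and suppose there is a constant C₀ > 0 such that |g^{(k)}(r)| ≤ C₀ r^{-k} for all r > 0 and all integers 0 ≤ k ≤ n+1. Then there exists a constant M such that for every t ∈ (0,1) the function r ↦ (d/dr)^{n+1}[ r^{n-1} exp(-r^γ/g(r t^{-1/γ})) ] is integrable on (0,∞) and ∫_0^∞ |(d/dr)^{n+1}[ r^{n-1} exp(-r^γ/g(r t^{-1/γ})) ]| dr ≤ M. -/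
open MeasureTheory Real Set
open scoped ENNReal

/-- Leibniz bound, in scale-invariant form. -/
lemma kdib_mul {f g : ℝ → ℝ} {k : ℕ} {r A : ℝ} (hr : 0 < r)
    (hf : ContDiffOn ℝ k f (Ioi 0)) (hg : ContDiffOn ℝ k g (Ioi 0))
    (h : ∀ j ≤ k, (|iteratedDerivWithin j f (Ioi 0) r| * r ^ j) *
      (|iteratedDerivWithin (k - j) g (Ioi 0) r| * r ^ (k - j)) ≤ A) :
    |iteratedDerivWithin k (f * g) (Ioi 0) r| * r ^ k ≤ 2 ^ k * A := by
  have hr' : r ∈ Ioi (0 : ℝ) := hr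
  rw [iteratedDerivWithin_mul hr' (uniqueDiffOn_Ioi 0) (hf r hr') (hg r hr')]
  calc _ ≤ (∑ i ∈ Finset.range (k + 1), |(k.choose i : ℝ) * iteratedDerivWithin i f (Ioi 0) r *
        iteratedDerivWithin (k - i) g (Ioi 0) r|) * r ^ k := by
        gcongr
        exact Finset.abs_sum_le_sum_abs _ _
    _ ≤ ∑ i ∈ Finset.range (k + 1), (k.choose i : ℝ) * A := by
        rw [Finset.sum_mul]
        refine Finset.sum_le_sum fun i hi => ?_
        have hik : i ≤ k := by simpa [Nat.lt_succ_iff] using hi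
        have := h i hik
        rw [abs_mul, abs_mul, Nat.abs_cast]
        calc _ = (k.choose i : ℝ) * ((|iteratedDerivWithin i f (Ioi 0) r| * r ^ i) *
              (|iteratedDerivWithin (k - i) g (Ioi 0) r| * r ^ (k - i))) := by
              rw [show r ^ k = r ^ i * r ^ (k - i) by rw [← pow_add]; congr 1; omega]
              ring
          _ ≤ _ := by gcongr
    _ = 2 ^ k * A := by
        rw [← Finset.sum_mul]
        congr 1
        exact_mod_cast Nat.sum_range_choose k

/-- Composition bound, in scale-invariant form. -/
lemma kdib_comp {f φ : ℝ → ℝ} {t : Set ℝ} {k : ℕ} {r A C : ℝ} (hr : 0 < r) (ht : IsOpen t)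
    (hφ : ContDiffOn ℝ k φ t) (hf : ContDiffOn ℝ k f (Ioi 0)) (hft : MapsTo f (Ioi 0) t)
    (hA : 1 ≤ A)
    (hC : ∀ j ≤ k, |iteratedDerivWithin j φ t (f r)| ≤ C)
    (h : ∀ j, 1 ≤ j → j ≤ k → |iteratedDerivWithin j f (Ioi 0) r| * r ^ j ≤ A) :
    |iteratedDerivWithin k (φ ∘ f) (Ioi 0) r| * r ^ k ≤ k.factorial * C * A ^ k := by
  have hr' : r ∈ Ioi (0 : ℝ) := hr
  have := norm_iteratedFDerivWithin_comp_le (n := k) (C := C) (D := A / r) hφ hf le_rfl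
    ht.uniqueDiffOn (uniqueDiffOn_Ioi 0) hft hr'
    (fun i hi => by
      rw [norm_iteratedFDerivWithin_eq_norm_iteratedDerivWithin]
      exact hC i hi)
    (fun i h1 hi => by
      rw [norm_iteratedFDerivWithin_eq_norm_iteratedDerivWithin, div_pow, le_div_iff₀ (by positivity)]
      exact (h i h1 hi).trans (le_self_pow₀ hA (by omega)))
  rw [norm_iteratedFDerivWithin_eq_norm_iteratedDerivWithin, div_pow, ← mul_div_assoc,
    le_div_iff₀ (by positivity)] at this
  exact this

lemma kdib_inv {u : ℝ → ℝ} {k : ℕ} {r A : ℝ} (hr : 0 < r)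
    (hu : ContDiffOn ℝ k u (Ioi 0)) (hu1 : ∀ x, 0 < x → 1 ≤ u x) (hA : 1 ≤ A)
    (h : ∀ j, 1 ≤ j → j ≤ k → |iteratedDerivWithin j u (Ioi 0) r| * r ^ j ≤ A) :
    |iteratedDerivWithin k (fun x => 1 / u x) (Ioi 0) r| * r ^ k ≤
      k.factorial * k.factorial * A ^ k := by
  have hm : MapsTo u (Ioi 0) (Ioi 0) := fun x hx => lt_of_lt_of_le one_pos (hu1 x hx)
  refine kdib_comp (φ := fun y => 1 / y) hr isOpen_Ioi ?_ hu hm hA ?_ h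
  · exact contDiffOn_const.div contDiffOn_id (fun x hx => ne_of_gt hx)
  · intro j hj
    rw [iteratedDerivWithin_one_div j isOpen_Ioi (hm hr)]
    have h1 := hu1 r hr
    have : (u r) ^ (-1 - j : ℤ) ≤ 1 := zpow_le_one_of_nonpos₀ h1 (by omega)
    have h0 : 0 ≤ (u r) ^ (-1 - j : ℤ) := by positivity
    simp only [abs_mul, abs_pow, abs_neg, abs_one, one_pow, one_mul, Nat.abs_cast, abs_of_nonneg h0]
    calc _ ≤ (j.factorial : ℝ) * 1 := by gcongr
      _ ≤ _ := by rw [mul_one]; exact_mod_cast Nat.factorial_le hj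

lemma kdib_exp {h : ℝ → ℝ} {k : ℕ} {r A : ℝ} (hr : 0 < r)
    (hh : ContDiffOn ℝ k h (Ioi 0)) (hA : 1 ≤ A)
    (hb : ∀ j, 1 ≤ j → j ≤ k → |iteratedDerivWithin j h (Ioi 0) r| * r ^ j ≤ A) :
    |iteratedDerivWithin k (fun x => Real.exp (h x)) (Ioi 0) r| * r ^ k ≤
      k.factorial * Real.exp (h r) * A ^ k := by
  refine kdib_comp (φ := Real.exp) (t := univ) hr isOpen_univ Real.contDiff_exp.contDiffOn hh
    (mapsTo_univ _ _) hA ?_ hb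
  intro j hj
  rw [iteratedDerivWithin_univ, iteratedDeriv_eq_iterate, Real.iter_deriv_exp, Real.abs_exp]

lemma kdib_rpow (γ : ℝ) (k : ℕ) {r : ℝ} (hr : 0 < r) :
    |iteratedDerivWithin k (fun x : ℝ => x ^ γ) (Ioi 0) r| * r ^ k ≤
      |(descPochhammer ℝ k).eval γ| * r ^ γ := by
  have hr' : r ∈ Ioi (0 : ℝ) := hr
  rw [iteratedDerivWithin_of_isOpen_eq_iterate isOpen_Ioi hr', Real.iter_deriv_rpow_const, abs_mul,
    abs_of_nonneg (rpow_nonneg hr.le _), mul_assoc, ← Real.rpow_natCast r k, ← Real.rpow_add hr,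
    sub_add_cancel]

lemma kdib_pow (m k : ℕ) {r : ℝ} (hr : 0 < r) :
    |iteratedDerivWithin k (fun x : ℝ => x ^ m) (Ioi 0) r| * r ^ k ≤
      (m.factorial : ℝ) * r ^ m := by
  have hr' : r ∈ Ioi (0 : ℝ) := hr
  rw [iteratedDerivWithin_pow hr' (uniqueDiffOn_Ioi 0)]
  rcases le_or_gt k m with h | h
  · rw [abs_of_nonneg (by positivity), mul_assoc, ← pow_add, Nat.sub_add_cancel h]
    gcongr
    rw [← Nat.factorial_mul_descFactorial h]
    exact Nat.le_mul_of_pos_left _ (Nat.factorial_pos _)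
  · rw [Nat.descFactorial_of_lt h]
    simp
    positivity

lemma kdib_h (N : ℕ) (γ C₀ : ℝ) : ∃ K : ℝ, 0 ≤ K ∧ ∀ u : ℝ → ℝ,
    ContDiffOn ℝ N u (Ioi 0) → (∀ x, 0 < x → 1 ≤ u x) →
    (∀ k ≤ N, ∀ r : ℝ, 0 < r → |iteratedDerivWithin k u (Ioi 0) r| * r ^ k ≤ C₀) →
    ∀ k ≤ N, ∀ r : ℝ, 0 < r →
      |iteratedDerivWithin k (fun r : ℝ => -(r ^ γ) / u r) (Ioi 0) r| * r ^ k ≤ K * r ^ γ := by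
  set P : ℝ := ∑ k ∈ Finset.range (N + 1), |(descPochhammer ℝ k).eval γ| with hP
  have hP0 : 0 ≤ P := Finset.sum_nonneg fun _ _ => abs_nonneg _
  set Q : ℝ := N.factorial * N.factorial * (max 1 C₀) ^ N with hQ
  refine ⟨2 ^ N * (P * Q), by positivity, ?_⟩
  intro u hu hu1 hub k hk r hr
  have e : (fun r : ℝ => -(r ^ γ) / u r) = (fun r : ℝ => -(r ^ γ)) * (fun r => 1 / u r) := by
    ext x; simp [div_eq_mul_inv]
  have hkN : ((k : ℕ) : WithTop ℕ∞) ≤ (N : ℕ) := by exact_mod_cast hk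
  have hc1 : ContDiffOn ℝ k (fun r : ℝ => -(r ^ γ)) (Ioi 0) :=
    (contDiffOn_id.rpow_const_of_ne (fun x hx => ne_of_gt hx)).neg
  have hc2 : ContDiffOn ℝ k (fun r : ℝ => 1 / u r) (Ioi 0) :=
    contDiffOn_const.div (hu.of_le hkN) (fun x hx => by have := hu1 x hx; positivity)
  rw [e]
  have hm := kdib_mul (A := (P * r ^ γ) * Q) hr hc1 hc2 ?_
  · calc _ ≤ _ := hm
      _ ≤ 2 ^ N * ((P * r ^ γ) * Q) := by gcongr; norm_num
      _ = _ := by ring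
  · intro j hj
    refine mul_le_mul ?_ ?_ (by positivity) (by positivity)
    · rw [iteratedDerivWithin_fun_neg, abs_neg]
      refine (kdib_rpow γ j hr).trans ?_
      gcongr
      exact Finset.single_le_sum (f := fun k => |(descPochhammer ℝ k).eval γ|)
        (fun _ _ => abs_nonneg _) (Finset.mem_range.2 (by omega))
    · have h1 : ((k - j : ℕ) : WithTop ℕ∞) ≤ (N : ℕ) := by exact_mod_cast (by omega : k - j ≤ N)
      refine (kdib_inv (A := max 1 C₀) hr (hu.of_le h1) hu1 (le_max_left _ _) ?_).trans ?_
      · intro i _ hi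
        exact (hub i (by omega) r hr).trans (le_max_right _ _)
      · have : (k - j).factorial ≤ N.factorial := Nat.factorial_le (by omega)
        rw [hQ]
        gcongr
        · exact le_max_left _ _
        · omega

lemma kdib_core (n : ℕ) (hn : 1 ≤ n) (γ C₀ : ℝ) : ∃ K : ℝ, 0 ≤ K ∧ ∀ u : ℝ → ℝ,
    ContDiffOn ℝ (n + 1 : ℕ) u (Ioi 0) → (∀ x, 0 < x → 1 ≤ u x) →
    (∀ k ≤ n + 1, ∀ r : ℝ, 0 < r → |iteratedDerivWithin k u (Ioi 0) r| * r ^ k ≤ C₀) →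
    ContDiffOn ℝ (n + 1 : ℕ) (fun r : ℝ => r ^ (n - 1) * Real.exp (-(r ^ γ) / u r)) (Ioi 0) ∧
    ∀ r : ℝ, 0 < r →
      |iteratedDerivWithin (n + 1) (fun r : ℝ => r ^ (n - 1) * Real.exp (-(r ^ γ) / u r))
        (Ioi 0) r| * r ^ 2 ≤ K * (r ^ γ * (1 + r ^ γ) ^ n * Real.exp (-(r ^ γ) / u r)) := by
  obtain ⟨K, hK0, hK⟩ := kdib_h (n + 1) γ C₀
  refine ⟨2 ^ (n + 1) * ((n - 1).factorial * (2 ^ n * (K * (n.factorial * (1 + K) ^ n)))),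
    by positivity, ?_⟩
  intro u hu hu1 hub
  have hh := hK u hu hu1 hub
  set h : ℝ → ℝ := fun r => -(r ^ γ) / u r with hdef
  have hhc : ContDiffOn ℝ (n + 1 : ℕ) h (Ioi 0) :=
    (contDiffOn_id.rpow_const_of_ne (fun x hx => ne_of_gt hx)).neg.div hu
      (fun x hx => by have := hu1 x hx; positivity)
  have hEc : ContDiffOn ℝ (n + 1 : ℕ) (fun r => Real.exp (h r)) (Ioi 0) := hhc.exp
  have hpc : ContDiffOn ℝ (n + 1 : ℕ) (fun r : ℝ => r ^ (n - 1)) (Ioi 0) := contDiffOn_id.pow _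
  refine ⟨hpc.mul hEc, ?_⟩
  intro r hr
  have hr' : r ∈ Ioi (0 : ℝ) := hr
  have hrγ : 0 < r ^ γ := rpow_pos_of_pos hr γ
  have hA : 1 ≤ (1 + K) * (1 + r ^ γ) := by nlinarith [mul_nonneg hK0 hrγ.le]
  -- bound on derivatives of E
  have hE : ∀ k ≤ n, |iteratedDerivWithin k (fun x => Real.exp (h x)) (Ioi 0) r| * r ^ k ≤
      n.factorial * Real.exp (h r) * ((1 + K) * (1 + r ^ γ)) ^ n := by
    intro k hk
    have h1 : ((k : ℕ) : WithTop ℕ∞) ≤ (n + 1 : ℕ) := by exact_mod_cast (by omega : k ≤ n + 1)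
    refine (kdib_exp hr (hhc.of_le h1) hA ?_).trans ?_
    · intro j _ hj
      refine (hh j (by omega) r hr).trans ?_
      nlinarith [mul_nonneg hK0 hrγ.le]
    · have : k.factorial ≤ n.factorial := Nat.factorial_le hk
      gcongr
  -- derivative of E
  have hE' : ∀ k ≤ n, |iteratedDerivWithin (k + 1) (fun x => Real.exp (h x)) (Ioi 0) r| *
      r ^ (k + 1) ≤ 2 ^ n * (K * r ^ γ *
        (n.factorial * Real.exp (h r) * ((1 + K) * (1 + r ^ γ)) ^ n)) := by
    intro k hk
    have h1 : ((k : ℕ) : WithTop ℕ∞) ≤ (n + 1 : ℕ) := by exact_mod_cast (by omega : k ≤ n + 1)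
    have h2 : ((k : ℕ) : WithTop ℕ∞) + 1 ≤ (n + 1 : ℕ) := by
      exact_mod_cast (by omega : k + 1 ≤ n + 1)
    have hd : EqOn (derivWithin (fun x => Real.exp (h x)) (Ioi 0))
        (derivWithin h (Ioi 0) * (fun x => Real.exp (h x))) (Ioi 0) := by
      intro x hx
      have hdx : DifferentiableWithinAt ℝ h (Ioi 0) x :=
        (hhc.differentiableOn (by simp)) x hx
      rw [derivWithin_exp hdx (uniqueDiffOn_Ioi 0 x hx)]
      simp [mul_comm]
    rw [iteratedDerivWithin_succ', iteratedDerivWithin_congr hd hr']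
    have := kdib_mul (k := k) (A := K * r ^ γ / r *
        (n.factorial * Real.exp (h r) * ((1 + K) * (1 + r ^ γ)) ^ n)) hr
      (hhc.derivWithin (uniqueDiffOn_Ioi 0) h2) (hEc.of_le h1) ?_
    · rw [pow_succ, ← mul_assoc]
      calc _ ≤ _ := mul_le_mul_of_nonneg_right this hr.le
        _ = 2 ^ k * (K * r ^ γ *
          (n.factorial * Real.exp (h r) * ((1 + K) * (1 + r ^ γ)) ^ n)) := by field_simp
        _ ≤ _ := by gcongr; norm_num
    · intro j hj
      refine mul_le_mul ?_ ?_ (by positivity) (by positivity)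
      · rw [← iteratedDerivWithin_succ', le_div_iff₀ hr, mul_assoc, ← pow_succ]
        exact hh (j + 1) (by omega) r hr
      · exact hE _ (by omega)
  have hF := kdib_mul (k := n + 1) (A := ((n - 1).factorial * r ^ (n - 1)) *
      (2 ^ n * (K * r ^ γ * (n.factorial * Real.exp (h r) * ((1 + K) * (1 + r ^ γ)) ^ n))))
      hr hpc hEc ?_
  · have h3 : r ^ (n + 1) = r ^ 2 * r ^ (n - 1) := by rw [← pow_add]; congr 1; omega
    rw [h3, ← mul_assoc] at hF
    refine le_of_mul_le_mul_right (hF.trans (le_of_eq ?_)) (by positivity : 0 < r ^ (n - 1))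
    rw [mul_pow]
    ring
  · intro j hj
    rcases Nat.lt_or_ge j (n + 1) with hj1 | hj1
    · obtain ⟨i, hi⟩ : ∃ i, n + 1 - j = i + 1 := ⟨n - j, by omega⟩
      rw [hi]
      have := hE' i (by omega)
      have := kdib_pow (n - 1) j hr
      gcongr
    · rw [iteratedDerivWithin_pow hr' (uniqueDiffOn_Ioi 0), Nat.descFactorial_of_lt (by omega)]
      simp only [Nat.cast_zero, zero_mul, abs_zero]
      positivity

/-- If `g ≥ 1` is `(n+1)`-times continuously differentiable on `(0,∞)` with
`|g^{(k)}(r)| ≤ C₀ r^{-k}` for `0 ≤ k ≤ n+1`, then the integrals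
`∫₀^∞ |∂_r^{n+1}(r^{n-1} e^{-r^γ/g(r t^{-1/γ})})| dr` are finite and bounded
uniformly in `t ∈ (0,1)`. -/
theorem kernel_derivative_integral_bound (n : ℕ) (hn : 1 ≤ n) (γ : ℝ) (hγ : 1 < γ)
    (g : ℝ → ℝ) (hg1 : ∀ r, 1 ≤ g r)
    (hsmooth : ContDiffOn ℝ (n + 1) g (Ioi 0))
    (C₀ : ℝ) (hC₀ : 0 < C₀)
    (hderiv : ∀ k ≤ n + 1, ∀ r : ℝ, 0 < r →
      |iteratedDerivWithin k g (Ioi 0) r| ≤ C₀ * r ^ (-(k : ℝ))) :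
    ∃ M : ℝ, ∀ t ∈ Ioo (0 : ℝ) 1,
      IntegrableOn (fun r : ℝ => iteratedDerivWithin (n + 1)
          (fun r : ℝ => r ^ (n - 1) * Real.exp (-(r ^ γ) / g (r * t ^ (-(1 / γ)))))
          (Ioi 0) r) (Ioi 0) volume ∧
      (∫ r in Ioi (0 : ℝ), |iteratedDerivWithin (n + 1)
          (fun r : ℝ => r ^ (n - 1) * Real.exp (-(r ^ γ) / g (r * t ^ (-(1 / γ)))))
          (Ioi 0) r|) ≤ M := by
  obtain ⟨K, hK0, hK⟩ := kdib_core n hn γ C₀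
  set G : ℝ → ℝ := fun r => K * (2 ^ n * (r ^ (γ - 2) * Real.exp (-(1 / C₀) * r ^ γ) +
    r ^ (γ - 2 + γ * n) * Real.exp (-(1 / C₀) * r ^ γ))) with hG
  have hGi : IntegrableOn G (Ioi 0) := by
    have hb : 0 < 1 / C₀ := by positivity
    have h0 : 0 ≤ γ * n := by positivity
    exact (((integrableOn_rpow_mul_exp_neg_mul_rpow (by linarith) (by linarith) hb).add
      (integrableOn_rpow_mul_exp_neg_mul_rpow (by linarith) (by linarith) hb)).const_mul _).const_mul _
  refine ⟨∫ r in Ioi (0 : ℝ), G r, ?_⟩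
  intro t ht
  set s : ℝ := t ^ (-(1 / γ)) with hs
  have hs0 : 0 < s := rpow_pos_of_pos ht.1 _
  have hsm : ContDiffOn ℝ (n + 1 : ℕ) g (Ioi 0) := by exact_mod_cast hsmooth
  have hmaps : MapsTo (s * ·) (Ioi (0 : ℝ)) (Ioi 0) := fun x hx => mul_pos hs0 hx
  have hu : ContDiffOn ℝ (n + 1 : ℕ) (fun r => g (r * s)) (Ioi 0) :=
    hsm.comp (contDiffOn_id.mul contDiffOn_const) (fun x hx => mul_pos hx hs0)
  have hub : ∀ k ≤ n + 1, ∀ r : ℝ, 0 < r →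
      |iteratedDerivWithin k (fun r => g (r * s)) (Ioi 0) r| * r ^ k ≤ C₀ := by
    intro k hk r hr
    have hr' : r ∈ Ioi (0 : ℝ) := hr
    have hkN : ((k : ℕ) : WithTop ℕ∞) ≤ (n + 1 : ℕ) := by exact_mod_cast hk
    have e : (fun r => g (r * s)) = fun r => g (s * r) := by ext x; rw [mul_comm]
    rw [e, iteratedDerivWithin_comp_const_smul hr' (uniqueDiffOn_Ioi 0) (hsm.of_le hkN) s hmaps,
      smul_eq_mul, abs_mul, abs_of_pos (pow_pos hs0 k)]
    have h1 := hderiv k hk (s * r) (mul_pos hs0 hr)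
    rw [Real.rpow_neg (mul_pos hs0 hr).le, Real.rpow_natCast, ← div_eq_mul_inv,
      le_div_iff₀ (pow_pos (mul_pos hs0 hr) k), mul_pow] at h1
    linarith
  obtain ⟨hFc, hF⟩ := hK (fun r => g (r * s)) hu (fun x _ => hg1 _) hub
  have hbound : ∀ r ∈ Ioi (0 : ℝ), |iteratedDerivWithin (n + 1)
          (fun r : ℝ => r ^ (n - 1) * Real.exp (-(r ^ γ) / g (r * s))) (Ioi 0) r| ≤ G r := by
    intro r hr
    have hr0 : 0 < r := hr
    have hrγ : 0 < r ^ γ := rpow_pos_of_pos hr0 γ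
    have hg0 : 0 < g (r * s) := lt_of_lt_of_le one_pos (hg1 _)
    have hgC : g (r * s) ≤ C₀ := by
      have := hub 0 (by omega) r hr0
      simp only [iteratedDerivWithin_zero, pow_zero, mul_one] at this
      exact (le_abs_self _).trans this
    have he : Real.exp (-(r ^ γ) / g (r * s)) ≤ Real.exp (-(1 / C₀) * r ^ γ) := by
      apply Real.exp_le_exp.2
      have : r ^ γ / C₀ ≤ r ^ γ / g (r * s) := by gcongr
      have e1 : -(r ^ γ) / g (r * s) = -(r ^ γ / g (r * s)) := by ring
      have e2 : -(1 / C₀) * r ^ γ = -(r ^ γ / C₀) := by ring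
      rw [e1, e2]
      linarith
    have hp : (1 + r ^ γ) ^ n ≤ 2 ^ n * (1 + (r ^ γ) ^ n) := by
      rcases le_total (r ^ γ) 1 with h | h
      · calc (1 + r ^ γ) ^ n ≤ 2 ^ n := by gcongr; linarith
          _ ≤ _ := le_mul_of_one_le_right (by positivity) (by have := pow_pos hrγ n; linarith)
      · calc (1 + r ^ γ) ^ n ≤ (2 * r ^ γ) ^ n := by gcongr; linarith
          _ = 2 ^ n * (r ^ γ) ^ n := mul_pow _ _ _
          _ ≤ _ := by gcongr; linarith
    refine le_of_mul_le_mul_right ((hF r hr0).trans ?_) (by positivity : 0 < r ^ 2)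
    have e3 : r ^ (γ - 2) * r ^ 2 = r ^ γ := by
      rw [← Real.rpow_natCast r 2, ← Real.rpow_add hr0]; congr 1; push_cast; ring
    have e4 : r ^ (γ - 2 + γ * n) = r ^ (γ - 2) * (r ^ γ) ^ n := by
      rw [Real.rpow_add hr0, Real.rpow_mul hr0.le, Real.rpow_natCast]
    calc _ ≤ K * (r ^ γ * (2 ^ n * (1 + (r ^ γ) ^ n)) * Real.exp (-(1 / C₀) * r ^ γ)) := by gcongr
      _ = G r * r ^ 2 := by
        rw [hG]
        simp only
        rw [e4, ← e3]
        ring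
  have hcont := hFc.continuousOn_iteratedDerivWithin le_rfl (uniqueDiffOn_Ioi 0)
  have hint : IntegrableOn (fun r : ℝ => iteratedDerivWithin (n + 1)
          (fun r : ℝ => r ^ (n - 1) * Real.exp (-(r ^ γ) / g (r * s)))
          (Ioi 0) r) (Ioi 0) volume :=
    Integrable.mono' hGi (hcont.aestronglyMeasurable measurableSet_Ioi)
      ((ae_restrict_iff' measurableSet_Ioi).2 (Filter.Eventually.of_forall hbound))
  exact ⟨hint, setIntegral_mono_on hint.abs hGi measurableSet_Ioi hbound⟩
end

section
/- Let n ≥ 1 be an integer and let γ > 1. Then the function r ↦ (d/dr)^{n+1}[ r^{n-1} e^{-r^γ} ] is integrable on (0,∞), i.e. ∫_0^∞ |(d/dr)^{n+1}( r^{n-1} e^{-r^γ} )| dr < ∞. -/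
open MeasureTheory Real Set

/-- Span of the functions `r ^ a * exp (-r ^ γ)` with `a ≥ b`. -/
def kerSpan (γ b : ℝ) : Submodule ℝ (ℝ → ℝ) :=
  Submodule.span ℝ {g | ∃ a : ℝ, b ≤ a ∧ g = fun r : ℝ => r ^ a * Real.exp (-(r ^ γ))}

lemma kerSpan_mem (γ b a : ℝ) (h : b ≤ a) :
    (fun r : ℝ => r ^ a * Real.exp (-(r ^ γ))) ∈ kerSpan γ b :=
  Submodule.subset_span ⟨a, h, rfl⟩

lemma ker_hasDerivAt (γ a r : ℝ) (hr : 0 < r) :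
    HasDerivAt (fun r : ℝ => r ^ a * Real.exp (-(r ^ γ)))
      (a * (r ^ (a - 1) * Real.exp (-(r ^ γ)))
        + (-γ) * (r ^ (a + γ - 1) * Real.exp (-(r ^ γ)))) r := by
  have h1 := Real.hasDerivAt_rpow_const (x := r) (p := a) (Or.inl hr.ne')
  have h2 := Real.hasDerivAt_rpow_const (x := r) (p := γ) (Or.inl hr.ne')
  have h3 := h1.mul h2.neg.exp
  refine h3.congr_deriv ?_
  have : r ^ (a + γ - 1) = r ^ a * r ^ (γ - 1) := by
    rw [← Real.rpow_add hr]; congr 1; ring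
  rw [this]; simp only [Pi.neg_apply]; ring

lemma kerSpan_deriv (γ b : ℝ) (hγ : 1 < γ) (g : ℝ → ℝ) (hg : g ∈ kerSpan γ b) :
    ∃ g' ∈ kerSpan γ (b - 1), ∀ r : ℝ, 0 < r → HasDerivAt g (g' r) r := by
  unfold kerSpan at hg
  induction hg using Submodule.span_induction with
  | mem x h =>
    obtain ⟨a, ha, rfl⟩ := h
    refine ⟨_, Submodule.add_mem _
      (Submodule.smul_mem _ a (kerSpan_mem γ (b - 1) (a - 1) (by linarith)))
      (Submodule.smul_mem _ (-γ) (kerSpan_mem γ (b - 1) (a + γ - 1) (by linarith))), ?_⟩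
    intro r hr
    exact ker_hasDerivAt γ a r hr
  | zero => exact ⟨0, Submodule.zero_mem _, fun r _ => hasDerivAt_const r (0 : ℝ)⟩
  | add x y _ _ hx hy =>
    obtain ⟨x', hx', hx⟩ := hx
    obtain ⟨y', hy', hy⟩ := hy
    exact ⟨x' + y', Submodule.add_mem _ hx' hy', fun r hr => (hx r hr).add (hy r hr)⟩
  | smul c x _ hx =>
    obtain ⟨x', hx', hx⟩ := hx
    exact ⟨c • x', Submodule.smul_mem _ c hx', fun r hr => (hx r hr).const_smul c⟩

lemma kerSpan_integrable (γ b : ℝ) (hγ : 1 < γ) (hb : -1 < b) (g : ℝ → ℝ)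
    (hg : g ∈ kerSpan γ b) : IntegrableOn g (Ioi (0 : ℝ)) volume := by
  unfold kerSpan at hg
  induction hg using Submodule.span_induction with
  | mem x h =>
    obtain ⟨a, ha, rfl⟩ := h
    exact integrableOn_rpow_mul_exp_neg_rpow (by linarith) (by linarith)
  | zero => exact integrableOn_zero
  | add x y _ _ hx hy => exact hx.add hy
  | smul c x _ hx => exact hx.smul c

lemma ker_iter (m : ℕ) (γ : ℝ) (hγ : 1 < γ) (k : ℕ) :
    ∃ g ∈ kerSpan γ (m + γ - k), ∀ r : ℝ, 0 < r →
      iteratedDerivWithin k (fun r : ℝ => r ^ m * Real.exp (-(r ^ γ))) (Ioi 0) r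
        = (∏ i ∈ Finset.range k, ((m : ℝ) - i)) *
            (r ^ ((m : ℝ) - k) * Real.exp (-(r ^ γ))) + g r := by
  induction k with
  | zero =>
    refine ⟨0, Submodule.zero_mem _, fun r hr => ?_⟩
    simp
  | succ k ih =>
    obtain ⟨g, hg, h⟩ := ih
    obtain ⟨g', hg', hd⟩ := kerSpan_deriv γ _ hγ g hg
    have e : (m : ℝ) + γ - (k + 1 : ℕ) = m + γ - k - 1 := by push_cast; ring
    set c := ∏ i ∈ Finset.range k, ((m : ℝ) - i) with hc
    refine ⟨_, Submodule.add_mem _ (Submodule.smul_mem _ (c * (-γ))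
      (kerSpan_mem γ _ ((m : ℝ) - k + γ - 1) (by rw [e]; linarith))) (e ▸ hg'), ?_⟩
    intro r hr
    rw [iteratedDerivWithin_succ]
    have h1 := ((ker_hasDerivAt γ ((m : ℝ) - k) r hr).const_mul c).add (hd r hr)
    have h2 := (h1.hasDerivWithinAt (s := Ioi 0)).congr (fun x hx => h x hx) (h r hr)
    rw [h2.derivWithin (isOpen_Ioi.uniqueDiffWithinAt hr), Finset.prod_range_succ, ← hc]
    have e2 : (m : ℝ) - (k + 1 : ℕ) = m - k - 1 := by push_cast; ring
    rw [e2]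
    simp only [Pi.add_apply, Pi.smul_apply, smul_eq_mul]
    ring

/-- For `n ≥ 1` and `γ > 1`, the function `r ↦ ∂_r^{n+1}( r^{n-1} e^{-r^γ} )` is
integrable on `(0,∞)`. -/
theorem derivative_of_kernel_integrand_integrable (n : ℕ) (hn : 1 ≤ n) (γ : ℝ)
    (hγ : 1 < γ) :
    IntegrableOn (fun r : ℝ => iteratedDerivWithin (n + 1)
        (fun r : ℝ => r ^ (n - 1) * Real.exp (-(r ^ γ))) (Ioi 0) r)
      (Ioi (0 : ℝ)) volume := by
  obtain ⟨m, rfl⟩ : ∃ m, n = m + 1 := ⟨n - 1, by omega⟩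
  obtain ⟨g, hg, h⟩ := ker_iter m γ hγ (m + 1 + 1)
  have hi := kerSpan_integrable γ _ hγ (by push_cast; linarith) g hg
  refine hi.congr_fun (fun r hr => ?_) measurableSet_Ioi
  have hz : (∏ i ∈ Finset.range (m + 1 + 1), ((m : ℝ) - i)) = 0 :=
    Finset.prod_eq_zero (i := m) (by simp) (by simp)
  have := h r hr
  rw [hz, zero_mul, zero_add] at this
  simpa using this.symm
end

section
/- Let n ≥ 1 be an integer and let γ > 1. Then there exists a constant C > 0 such that for every real σ ≥ 1, |∫_0^∞ τ^{n-1} e^{-τ^γ} e^{iστ} dτ| ≤ C σ^{-n}. -/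
open MeasureTheory Real Set

noncomputable def oscF (γ a σ τ : ℝ) : ℂ :=
  ((τ ^ a * Real.exp (-(τ ^ γ)) : ℝ) : ℂ) * Complex.exp (Complex.I * (σ : ℂ) * (τ : ℂ))

lemma oscF_norm (γ a σ τ : ℝ) (h : 0 < τ) : ‖oscF γ a σ τ‖ = τ ^ a * Real.exp (-(τ ^ γ)) := by
  unfold oscF
  have h1 : ‖Complex.exp (Complex.I * (σ : ℂ) * (τ : ℂ))‖ = 1 := by
    rw [Complex.norm_exp]; simp
  rw [norm_mul, h1, mul_one, Complex.norm_real, Real.norm_of_nonneg (by positivity)]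

lemma oscF_int (γ a σ : ℝ) (hγ : 1 < γ) (ha : -1 < a) : IntegrableOn (oscF γ a σ) (Ioi 0) := by
  have h := integrableOn_rpow_mul_exp_neg_rpow (s := a) (p := γ) ha (by linarith)
  refine Integrable.mono' h ?_ ?_
  · refine Measurable.aestronglyMeasurable ?_
    unfold oscF
    fun_prop
  · filter_upwards [ae_restrict_mem measurableSet_Ioi] with τ hτ
    exact (oscF_norm γ a σ τ hτ).le

lemma oscF_deriv (γ a σ τ : ℝ) (h : 0 < τ) :
    HasDerivAt (oscF γ a σ) ((a : ℂ) * oscF γ (a - 1) σ τ - γ * oscF γ (a + γ - 1) σ τ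
      + Complex.I * σ * oscF γ a σ τ) τ := by
  have h1 : HasDerivAt (fun τ : ℝ => τ ^ a * Real.exp (-(τ ^ γ)))
      (a * τ ^ (a - 1) * Real.exp (-(τ ^ γ)) +
        τ ^ a * (Real.exp (-(τ ^ γ)) * (-(γ * τ ^ (γ - 1))))) τ :=
    (Real.hasDerivAt_rpow_const (Or.inl h.ne')).mul
      ((Real.hasDerivAt_rpow_const (Or.inl h.ne')).neg.exp)
  have h2 : HasDerivAt (fun τ : ℝ => Complex.exp (Complex.I * (σ : ℂ) * (τ : ℂ)))
      (Complex.exp (Complex.I * (σ : ℂ) * (τ : ℂ)) * (Complex.I * σ * 1)) τ :=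
    ((Complex.ofRealCLM.hasDerivAt (x := τ)).const_mul (Complex.I * (σ : ℂ))).cexp
  have h3 := h1.ofReal_comp.mul h2
  refine h3.congr_deriv ?_
  have h4 : τ ^ (a + γ - 1) = τ ^ a * τ ^ (γ - 1) := by
    rw [← Real.rpow_add h]; ring_nf
  unfold oscF
  rw [h4]
  push_cast
  ring

lemma oscF_ibp (γ a σ : ℝ) (hγ : 1 < γ) (ha : 0 ≤ a) :
    (a : ℂ) * (∫ τ in Ioi 0, oscF γ (a - 1) σ τ) - γ * (∫ τ in Ioi 0, oscF γ (a + γ - 1) σ τ)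
      + Complex.I * σ * (∫ τ in Ioi 0, oscF γ a σ τ) = - oscF γ a σ 0 := by
  have i1 : IntegrableOn (fun τ => (a : ℂ) * oscF γ (a - 1) σ τ) (Ioi 0) := by
    rcases ha.eq_or_lt with rfl | h
    · simp
    · exact (oscF_int γ (a - 1) σ hγ (by linarith)).const_mul _
  have i2 : IntegrableOn (fun τ => (γ : ℂ) * oscF γ (a + γ - 1) σ τ) (Ioi 0) :=
    (oscF_int γ _ σ hγ (by linarith)).const_mul _
  have i0 := oscF_int γ a σ hγ (by linarith)
  have i3 : IntegrableOn (fun τ => Complex.I * σ * oscF γ a σ τ) (Ioi 0) := i0.const_mul _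
  have hd : ∀ τ ∈ Ioi (0 : ℝ), HasDerivAt (oscF γ a σ) _ τ := fun τ hτ => oscF_deriv γ a σ τ hτ
  have i12 := i1.sub i2
  have i := i12.add i3
  have hc : ContinuousWithinAt (oscF γ a σ) (Ici 0) 0 := by
    apply ContinuousAt.continuousWithinAt
    have c1 : ContinuousAt (fun x : ℝ => x ^ a) 0 := Real.continuousAt_rpow_const _ _ (Or.inr ha)
    have c2 : ContinuousAt (fun x : ℝ => x ^ γ) 0 :=
      Real.continuousAt_rpow_const _ _ (Or.inr (by linarith))
    unfold oscF
    fun_prop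
  have key := integral_Ioi_of_hasDerivAt_of_tendsto hc hd i
    (tendsto_zero_of_hasDerivAt_of_integrableOn_Ioi hd i i0)
  rw [zero_sub] at key
  rw [← key]
  have e1 := integral_add i12 i3
  have e2 := integral_sub i1 i2
  simp only [Pi.sub_apply] at e1
  rw [e1, e2, integral_const_mul, integral_const_mul, integral_const_mul]

lemma osc_main (γ : ℝ) (hγ : 1 < γ) (k : ℕ) : ∀ a : ℝ, -1 < a → (k : ℝ) - 1 ≤ a →
    ∃ C : ℝ, 0 ≤ C ∧ ∀ σ : ℝ, 1 ≤ σ → σ ^ k * ‖∫ τ in Ioi 0, oscF γ a σ τ‖ ≤ C := by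
  induction k with
  | zero =>
    intro a ha _
    refine ⟨∫ τ in Ioi 0, τ ^ a * Real.exp (-(τ ^ γ)), ?_, fun σ _ => ?_⟩
    · exact setIntegral_nonneg measurableSet_Ioi fun τ hτ => by
        have : 0 < τ := hτ
        positivity
    · rw [pow_zero, one_mul]
      refine (norm_integral_le_integral_norm _).trans_eq ?_
      exact setIntegral_congr_fun measurableSet_Ioi fun τ hτ => oscF_norm γ a σ τ hτ
  | succ k ih =>
    intro a ha hk
    push_cast at hk
    have hk0 : (0 : ℝ) ≤ k := k.cast_nonneg
    have ha0 : 0 ≤ a := by linarith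
    obtain ⟨C1, hC1, h1⟩ : ∃ C : ℝ, 0 ≤ C ∧ ∀ σ : ℝ, 1 ≤ σ →
        σ ^ k * ‖(a : ℂ) * ∫ τ in Ioi 0, oscF γ (a - 1) σ τ‖ ≤ C := by
      rcases ha0.eq_or_lt with rfl | h
      · exact ⟨0, le_rfl, by simp⟩
      · obtain ⟨C, hC, h'⟩ := ih (a - 1) (by linarith) (by linarith)
        refine ⟨a * C, by positivity, fun σ hσ => ?_⟩
        rw [norm_mul, Complex.norm_real, Real.norm_of_nonneg ha0]
        nlinarith [h' σ hσ]
    obtain ⟨C2, hC2, h2⟩ := ih (a + γ - 1) (by linarith) (by linarith)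
    have h3 : ∀ σ : ℝ, 1 ≤ σ → σ ^ k * ‖oscF γ a σ 0‖ ≤ 1 := by
      intro σ hσ
      have hg : (0 : ℝ) ^ γ = 0 := Real.zero_rpow (by linarith)
      rcases ha0.eq_or_lt with rfl | h
      · have : k = 0 := by
          have : (k : ℝ) = 0 := by linarith
          exact_mod_cast this
        subst this
        simp [oscF, hg]
      · simp [oscF, Real.zero_rpow h.ne']
    refine ⟨C1 + γ * C2 + 1, by positivity, fun σ hσ => ?_⟩
    have hb := oscF_ibp γ a σ hγ ha0
    have hI : ‖Complex.I * σ * (∫ τ in Ioi 0, oscF γ a σ τ)‖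
        = σ * ‖∫ τ in Ioi 0, oscF γ a σ τ‖ := by
      rw [norm_mul, norm_mul, Complex.norm_I, Complex.norm_real,
        Real.norm_of_nonneg (by linarith), one_mul]
    have hJ : Complex.I * σ * (∫ τ in Ioi 0, oscF γ a σ τ) =
        γ * (∫ τ in Ioi 0, oscF γ (a + γ - 1) σ τ)
          - (a : ℂ) * (∫ τ in Ioi 0, oscF γ (a - 1) σ τ) - oscF γ a σ 0 := by
      linear_combination hb
    have hN : σ * ‖∫ τ in Ioi 0, oscF γ a σ τ‖ ≤
        γ * ‖∫ τ in Ioi 0, oscF γ (a + γ - 1) σ τ‖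
          + ‖(a : ℂ) * ∫ τ in Ioi 0, oscF γ (a - 1) σ τ‖ + ‖oscF γ a σ 0‖ := by
      rw [← hI, hJ]
      refine (norm_sub_le _ _).trans (add_le_add_left ((norm_sub_le _ _).trans ?_) _)
      rw [norm_mul, Complex.norm_real, Real.norm_of_nonneg (by linarith : 0 ≤ γ)]
    have hs : 0 ≤ σ ^ k := by positivity
    have hm := mul_le_mul_of_nonneg_left hN hs
    have h2' := mul_le_mul_of_nonneg_left (h2 σ hσ) (by linarith : 0 ≤ γ)
    have h1' := h1 σ hσ
    have h3' := h3 σ hσ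
    rw [pow_succ]
    linarith

/-- For `n ≥ 1` and `γ > 1`, oscillatory integral decay:
`|∫₀^∞ τ^{n-1} e^{-τ^γ} e^{iστ} dτ| ≤ C σ^{-n}` for all `σ ≥ 1`. -/
theorem oscillatory_integral_decay (n : ℕ) (hn : 1 ≤ n) (γ : ℝ) (hγ : 1 < γ) :
    ∃ C : ℝ, 0 < C ∧ ∀ σ : ℝ, 1 ≤ σ →
      ‖∫ τ in Ioi (0 : ℝ),
          ((τ ^ (n - 1) * Real.exp (-(τ ^ γ)) : ℝ) : ℂ) *
            Complex.exp (Complex.I * (σ : ℂ) * (τ : ℂ))‖ ≤ C * σ ^ (-(n : ℝ)) := by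
  have hc : ((n - 1 : ℕ) : ℝ) = n - 1 := by push_cast [hn]; ring
  obtain ⟨C, hC, h⟩ := osc_main γ hγ n ((n - 1 : ℕ) : ℝ)
    (by have : (0 : ℝ) ≤ ((n - 1 : ℕ) : ℝ) := Nat.cast_nonneg _
        linarith) hc.ge
  refine ⟨C + 1, by linarith, fun σ hσ => ?_⟩
  have h' := h σ hσ
  simp only [oscF, Real.rpow_natCast] at h'
  have hp : 0 < σ ^ n := by positivity
  rw [Real.rpow_neg (by linarith), Real.rpow_natCast, ← div_eq_mul_inv, le_div_iff₀ hp]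
  linarith
end

section
/- Let γ > 0 and let k ≥ 1 be an integer. Let g : ℝ → ℝ be k-times continuously differentiable on (0,∞), bounded below by 1, and suppose there is a constant C₀ with |g^{(m)}(r)| ≤ C₀ r^{-m} for all r > 0 and all integers 1 ≤ m ≤ k. Then there exists a constant C > 0 such that for every t ∈ (0,1] and every r > 0, the k-th derivative of the function r ↦ exp(-t r^γ / g(r)) satisfies |(d/dr)^k exp(-t r^γ/g(r))| ≤ C r^{-k}. In particular, the symbols r ↦ exp(-t r^γ/g(r)) satisfy Mikhlin-type derivative bounds of order k uniformly in t ∈ (0,1]. -/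
open MeasureTheory Real Set

/-- Families of symbols of order `n` with weight `w`, uniformly in the index. -/
def SymB {ι : Type} : ℕ → (ι → ℝ → ℝ) → (ι → ℝ → ℝ) → Prop
  | 0, f, w => ∃ C : ℝ, 0 ≤ C ∧ ∀ i r, 0 < r → |f i r| ≤ C * w i r
  | n + 1, f, w => (∃ C : ℝ, 0 ≤ C ∧ ∀ i r, 0 < r → |f i r| ≤ C * w i r) ∧
      ∃ f' : ι → ℝ → ℝ, (∀ i r, 0 < r → HasDerivAt (f i) (f' i r) r) ∧
        SymB n f' (fun i r => w i r / r)

theorem SymB.bound {ι : Type} {n : ℕ} {f w : ι → ℝ → ℝ} (h : SymB n f w) :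
    ∃ C : ℝ, 0 ≤ C ∧ ∀ i r, 0 < r → |f i r| ≤ C * w i r := by
  cases n with
  | zero => exact h
  | succ n => exact h.1

theorem SymB.of_succ {ι : Type} {n : ℕ} : ∀ {f w : ι → ℝ → ℝ}, SymB (n + 1) f w → SymB n f w := by
  induction n with
  | zero => intro f w h; exact h.1
  | succ n ih =>
    rintro f w ⟨h, f', hf, h'⟩
    exact ⟨h, f', hf, ih h'⟩

theorem SymB.mono {ι : Type} {n : ℕ} : ∀ {f w v : ι → ℝ → ℝ}, SymB n f w →
    (∀ i r, 0 < r → w i r ≤ v i r) → SymB n f v := by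
  have key : ∀ {f w v : ι → ℝ → ℝ}, (∃ C : ℝ, 0 ≤ C ∧ ∀ i r, 0 < r → |f i r| ≤ C * w i r) →
      (∀ i r, 0 < r → w i r ≤ v i r) → 
      (∃ C : ℝ, 0 ≤ C ∧ ∀ i r, 0 < r → |f i r| ≤ C * v i r) := by
    rintro f w v ⟨C, hC, h⟩ hw
    exact ⟨C, hC, fun i r hr => (h i r hr).trans (mul_le_mul_of_nonneg_left (hw i r hr) hC)⟩
  induction n with
  | zero => intro f w v h hw; exact key h hw
  | succ n ih =>
    rintro f w v ⟨h, f', hf, h'⟩ hw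
    refine ⟨key h hw, f', hf, ih h' fun i r hr => ?_⟩
    have := hw i r hr
    show w i r / r ≤ v i r / r
    gcongr

theorem SymB.congr {ι : Type} {n : ℕ} {f g w : ι → ℝ → ℝ} (h : SymB n f w)
    (hfg : ∀ i r, f i r = g i r) : SymB n g w := by
  have : f = g := by ext i r; exact hfg i r
  rwa [← this]

theorem SymB.add {ι : Type} {n : ℕ} : ∀ {f g w : ι → ℝ → ℝ}, SymB n f w → SymB n g w →
    SymB n (fun i r => f i r + g i r) w := by
  have key : ∀ {f g w : ι → ℝ → ℝ}, (∃ C : ℝ, 0 ≤ C ∧ ∀ i r, 0 < r → |f i r| ≤ C * w i r) →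
      (∃ C : ℝ, 0 ≤ C ∧ ∀ i r, 0 < r → |g i r| ≤ C * w i r) → 
      (∃ C : ℝ, 0 ≤ C ∧ ∀ i r, 0 < r → |f i r + g i r| ≤ C * w i r) := by
    rintro f g w ⟨C, hC, h⟩ ⟨D, hD, h'⟩
    refine ⟨C + D, by positivity, fun i r hr => (abs_add_le _ _).trans ?_⟩
    linarith [h i r hr, h' i r hr]
  induction n with
  | zero => intro f g w h h'; exact key h h'
  | succ n ih =>
    rintro f g w ⟨h, f', hf, hs⟩ ⟨h', g', hg, hs'⟩
    exact ⟨key h h', _, fun i r hr => (hf i r hr).add (hg i r hr), ih hs hs'⟩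

theorem SymB.mul {ι : Type} {n : ℕ} : ∀ {f g w v : ι → ℝ → ℝ}, SymB n f w → SymB n g v →
    SymB n (fun i r => f i r * g i r) (fun i r => w i r * v i r) := by
  have key : ∀ {f g w v : ι → ℝ → ℝ}, (∃ C : ℝ, 0 ≤ C ∧ ∀ i r, 0 < r → |f i r| ≤ C * w i r) →
      (∃ C : ℝ, 0 ≤ C ∧ ∀ i r, 0 < r → |g i r| ≤ C * v i r) → 
      (∃ C : ℝ, 0 ≤ C ∧ ∀ i r, 0 < r → |f i r * g i r| ≤ C * (w i r * v i r)) := by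
    rintro f g w v ⟨C, hC, h⟩ ⟨D, hD, h'⟩
    refine ⟨C * D, by positivity, fun i r hr => ?_⟩
    rw [abs_mul]
    have := mul_le_mul (h i r hr) (h' i r hr) (abs_nonneg _) ((abs_nonneg _).trans (h i r hr))
    linarith
  induction n with
  | zero => intro f g w v h h'; exact key h h'
  | succ n ih =>
    rintro f g w v h0 h0'
    obtain ⟨h, f', hf, hs⟩ := id h0
    obtain ⟨h', g', hg, hs'⟩ := id h0'
    refine ⟨key h h', _, fun i r hr => (hf i r hr).mul (hg i r hr), ?_⟩
    refine SymB.add ((ih hs h0'.of_succ).mono fun i r hr => le_of_eq ?_)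
      ((ih h0.of_succ hs').mono fun i r hr => le_of_eq ?_) <;> ring

theorem SymB.neg {ι : Type} {n : ℕ} : ∀ {f w : ι → ℝ → ℝ}, SymB n f w →
    SymB n (fun i r => - f i r) w := by
  induction n with
  | zero => rintro f w ⟨C, hC, h⟩; exact ⟨C, hC, by simpa using h⟩
  | succ n ih =>
    rintro f w ⟨⟨C, hC, h⟩, f', hf, h'⟩
    exact ⟨⟨C, hC, by simpa using h⟩, _, fun i r hr => (hf i r hr).neg, ih h'⟩

theorem SymB.zero {ι : Type} {n : ℕ} : ∀ {w : ι → ℝ → ℝ}, (∀ i r, 0 < r → 0 ≤ w i r) →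
    SymB n (fun _ _ => 0) w := by
  induction n with
  | zero => intro w hw; exact ⟨0, le_rfl, by simp⟩
  | succ n ih =>
    intro w hw
    exact ⟨⟨0, le_rfl, by simp⟩, fun _ _ => 0, fun i r hr => hasDerivAt_const _ _,
      ih fun i r hr => div_nonneg (hw i r hr) hr.le⟩

theorem SymB.const {ι : Type} {n : ℕ} (c : ι → ℝ) :
    SymB n (fun i _ => c i) (fun i _ => |c i|) := by
  cases n with
  | zero => exact ⟨1, zero_le_one, by simp⟩
  | succ n => exact ⟨⟨1, zero_le_one, by simp⟩, fun _ _ => 0, fun i r hr => hasDerivAt_const _ _,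
      SymB.zero fun i r hr => div_nonneg (abs_nonneg _) hr.le⟩

theorem SymB.rpow {ι : Type} {n : ℕ} : ∀ (c γ : ℝ),
    SymB n (fun (_ : ι) r => c * r ^ γ) (fun _ r => r ^ γ) := by
  have key : ∀ (c γ : ℝ), ∃ C : ℝ, 0 ≤ C ∧ ∀ (_ : ι) (r : ℝ), 0 < r → |c * r ^ γ| ≤ C * r ^ γ :=
    fun c γ => ⟨|c|, abs_nonneg c, fun _ r hr => by
      rw [abs_mul, abs_of_pos (Real.rpow_pos_of_pos hr γ)]⟩
  induction n with
  | zero => exact key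
  | succ n ih =>
    intro c γ
    refine ⟨key c γ, fun _ r => (c * γ) * r ^ (γ - 1), fun i r hr => ?_,
      (ih (c * γ) (γ - 1)).mono fun i r hr => le_of_eq (Real.rpow_sub_one hr.ne' γ)⟩
    have := (Real.hasDerivAt_rpow_const (p := γ) (Or.inl hr.ne')).const_mul c
    rwa [← mul_assoc] at this

theorem SymB.inv {ι : Type} {g g' : ι → ℝ → ℝ} (hg1 : ∀ i r, 1 ≤ g i r)
    (hg : ∀ i r, 0 < r → HasDerivAt (g i) (g' i r) r) {n : ℕ} :
    (∀ m < n, SymB m g' (fun _ r => 1 / r)) →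
    SymB n (fun i r => (g i r)⁻¹) (fun i r => (g i r)⁻¹) := by
  have key : ∃ C : ℝ, 0 ≤ C ∧ ∀ i r, 0 < r → |(g i r)⁻¹| ≤ C * (g i r)⁻¹ :=
    ⟨1, zero_le_one, fun i r hr => by
      rw [one_mul, abs_of_nonneg (inv_nonneg.2 (zero_le_one.trans (hg1 i r)))]⟩
  induction n with
  | zero => intro _; exact key
  | succ n ih =>
    intro h
    have h1 := ih fun m hm => h m (hm.trans (Nat.lt_succ_self n))
    refine ⟨key, fun i r => -g' i r * ((g i r)⁻¹ * (g i r)⁻¹), fun i r hr => ?_,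
      ((h n (Nat.lt_succ_self n)).neg.mul (h1.mul h1)).mono fun i r hr => ?_⟩
    · have h0 : g i r ≠ 0 := by linarith [hg1 i r]
      exact ((hg i r hr).fun_inv h0).congr_deriv (by field_simp)
    · have h0 : (g i r)⁻¹ ≤ 1 := inv_le_one_of_one_le₀ (hg1 i r)
      have h2 : 0 ≤ (g i r)⁻¹ := inv_nonneg.2 (zero_le_one.trans (hg1 i r))
      show 1 / r * ((g i r)⁻¹ * (g i r)⁻¹) ≤ (g i r)⁻¹ / r
      rw [div_mul_eq_mul_div, one_mul]
      gcongr
      nlinarith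

theorem SymB.exp {ι : Type} {u : ι → ℝ → ℝ} (hu : ∀ i r, 0 < r → 0 ≤ u i r) {n : ℕ} :
    SymB n u u → SymB n (fun i r => Real.exp (-u i r))
      (fun i r => (1 + u i r) ^ n * Real.exp (-u i r)) := by
  induction n with
  | zero => intro _; exact ⟨1, zero_le_one, by simp⟩
  | succ n ih =>
    intro h
    have h1 := ih h.of_succ
    obtain ⟨-, u', hu', hs⟩ := h
    refine ⟨⟨1, zero_le_one, fun i r hr => ?_⟩, fun i r => -u' i r * Real.exp (-u i r),
      fun i r hr => ?_, (hs.neg.mul h1).mono fun i r hr => ?_⟩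
    · have h0 := hu i r hr
      rw [abs_of_pos (Real.exp_pos _), one_mul]
      exact le_mul_of_one_le_left (Real.exp_pos _).le (one_le_pow₀ (by linarith))
    · exact (hu' i r hr).fun_neg.exp.congr_deriv (mul_comm _ _)
    · have h0 := hu i r hr
      show u i r / r * ((1 + u i r) ^ n * Real.exp (-u i r)) ≤
        (1 + u i r) ^ (n + 1) * Real.exp (-u i r) / r
      rw [div_mul_eq_mul_div, pow_succ', mul_assoc]
      gcongr
      linarith

theorem SymB.iter {ι : Type} {n : ℕ} : ∀ {f w : ι → ℝ → ℝ}, SymB n f w →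
    ∃ C : ℝ, 0 ≤ C ∧ ∀ i r, 0 < r →
      |iteratedDerivWithin n (f i) (Ioi 0) r| ≤ C * (w i r / r ^ n) := by
  induction n with
  | zero => rintro f w ⟨C, hC, h⟩; exact ⟨C, hC, by simpa using h⟩
  | succ n ih =>
    rintro f w ⟨-, f', hf, h'⟩
    obtain ⟨C, hC, h⟩ := ih h'
    refine ⟨C, hC, fun i r hr => ?_⟩
    rw [iteratedDerivWithin_succ', iteratedDerivWithin_congr (g := f' i) (s := Ioi 0) _ (mem_Ioi.2 hr)]
    · refine (h i r hr).trans (le_of_eq ?_)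
      rw [pow_succ', div_div]
    · intro x hx
      exact (hf i x hx).hasDerivWithinAt.derivWithin (uniqueDiffOn_Ioi 0 x hx)

theorem SymB.of_contDiffOn {n : ℕ} : ∀ {f : ℝ → ℝ} {w : ℝ → ℝ} {C : ℝ}, 0 ≤ C →
    ContDiffOn ℝ n f (Ioi 0) →
    (∀ m ≤ n, ∀ r, 0 < r → |iteratedDerivWithin m f (Ioi 0) r| ≤ C * (w r / r ^ m)) →
    ∀ ι : Type, SymB n (fun (_ : ι) r => f r) (fun _ r => w r) := by
  induction n with
  | zero => intro f w C hC _ h ι; exact ⟨C, hC, fun _ => by simpa using h⟩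
  | succ n ih =>
    intro f w C hC hf h ι
    refine ⟨⟨C, hC, fun _ r hr => by simpa using h 0 (Nat.zero_le _) r hr⟩,
      fun _ r => derivWithin f (Ioi 0) r, fun _ r hr => ?_, ?_⟩
    · have hd : DifferentiableOn ℝ f (Ioi 0) := hf.differentiableOn (by simp)
      exact (hd r hr).hasDerivWithinAt.hasDerivAt (Ioi_mem_nhds hr)
    · refine ih (f := derivWithin f (Ioi 0)) (w := fun r => w r / r) hC
        (hf.derivWithin (uniqueDiffOn_Ioi 0) (by simp)) (fun m hm r hr => ?_) ι
      rw [← iteratedDerivWithin_succ']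
      refine (h (m + 1) (by omega) r hr).trans (le_of_eq ?_)
      rw [pow_succ', div_div]

/-- If `g ≥ 1` is `k`-times continuously differentiable on `(0,∞)` with
`|g^{(m)}(r)| ≤ C₀ r^{-m}` for `1 ≤ m ≤ k`, then the symbols `r ↦ exp(-t r^γ / g r)`
satisfy Mikhlin-type derivative bounds of order `k` uniformly in `t ∈ (0,1]`. -/
theorem symbol_mikhlin_bound (γ : ℝ) (hγ : 0 < γ) (k : ℕ) (hk : 1 ≤ k) (g : ℝ → ℝ)
    (hsmooth : ContDiffOn ℝ k g (Ioi 0)) (hg1 : ∀ r, 1 ≤ g r)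
    (C₀ : ℝ)
    (hderiv : ∀ m, 1 ≤ m → m ≤ k → ∀ r : ℝ, 0 < r →
      |iteratedDerivWithin m g (Ioi 0) r| ≤ C₀ * r ^ (-(m : ℝ))) :
    ∃ C : ℝ, 0 < C ∧ ∀ t ∈ Ioc (0 : ℝ) 1, ∀ r : ℝ, 0 < r →
      |iteratedDerivWithin k (fun r : ℝ => Real.exp (-t * r ^ γ / g r)) (Ioi 0) r| ≤
        C * r ^ (-(k : ℝ)) := by
  have hC₀ : 0 ≤ C₀ := by
    have := (abs_nonneg _).trans (hderiv 1 le_rfl hk 1 one_pos)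
    simpa using this
  have hd : DifferentiableOn ℝ g (Ioi 0) :=
    hsmooth.differentiableOn (by exact_mod_cast (by omega : k ≠ 0))
  have hg' : ∀ m < k, SymB m (fun (_ : Ioc (0:ℝ) 1) r => derivWithin g (Ioi 0) r)
      (fun _ r => 1 / r) := by
    intro m hm
    refine SymB.of_contDiffOn (w := fun r => 1 / r) hC₀
      (hsmooth.derivWithin (uniqueDiffOn_Ioi 0) (by exact_mod_cast hm)) (fun j hj r hr => ?_) _
    rw [← iteratedDerivWithin_succ']
    refine (hderiv (j + 1) (by omega) (by omega) r hr).trans (le_of_eq ?_)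
    rw [Real.rpow_neg hr.le, Real.rpow_natCast, pow_succ', div_div, one_div]
  have hinv : SymB k (fun (_ : Ioc (0:ℝ) 1) r => (g r)⁻¹) (fun _ r => (g r)⁻¹) :=
    SymB.inv (fun _ r => hg1 r)
      (fun _ r hr => (hd r hr).hasDerivWithinAt.hasDerivAt (Ioi_mem_nhds hr)) hg'
  have hu : SymB k (fun (t : Ioc (0:ℝ) 1) r => (t : ℝ) * (1 * r ^ γ * (g r)⁻¹))
      (fun (t : Ioc (0:ℝ) 1) r => (t : ℝ) * (1 * r ^ γ * (g r)⁻¹)) := by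
    refine ((SymB.const (fun t : Ioc (0:ℝ) 1 => (t : ℝ))).mul
      ((SymB.rpow 1 γ).mul hinv)).mono fun t r hr => le_of_eq ?_
    rw [abs_of_pos t.2.1, one_mul]
  have hu0 : ∀ (t : Ioc (0:ℝ) 1) r, 0 < r → 0 ≤ (t : ℝ) * (1 * r ^ γ * (g r)⁻¹) := by
    intro t r hr
    have := t.2.1
    have h2 : 0 ≤ (g r)⁻¹ := inv_nonneg.2 (zero_le_one.trans (hg1 r))
    positivity
  obtain ⟨C, hC, h⟩ := (SymB.exp hu0 hu).iter
  refine ⟨C * (k.factorial * Real.exp 1) + 1, by positivity, fun t ht r hr => ?_⟩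
  have h1 := h ⟨t, ht⟩ r hr
  have h2 := hu0 ⟨t, ht⟩ r hr
  have hfun : (fun r : ℝ => Real.exp (-t * r ^ γ / g r)) =
      fun r : ℝ => Real.exp (-(t * (1 * r ^ γ * (g r)⁻¹))) := by
    ext r; congr 1; ring
  rw [hfun]
  refine h1.trans ?_
  rw [Real.rpow_neg hr.le, Real.rpow_natCast, div_eq_mul_inv, ← mul_assoc]
  refine mul_le_mul_of_nonneg_right ?_ (by positivity)
  simp only at h2 ⊢
  generalize t * (1 * r ^ γ * (g r)⁻¹) = x at h2 ⊢
  have h3 := Real.pow_div_factorial_le_exp (1 + x) (by linarith) k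
  rw [div_le_iff₀ (by positivity)] at h3
  have h4 : (1 + x) ^ k * Real.exp (-x) ≤ k.factorial * Real.exp 1 := by
    calc (1 + x) ^ k * Real.exp (-x) ≤ (Real.exp (1 + x) * k.factorial) * Real.exp (-x) := by gcongr
      _ = k.factorial * Real.exp 1 := by
        rw [mul_right_comm, ← Real.exp_add, mul_comm]; ring_nf
  have := mul_le_mul_of_nonneg_left h4 hC
  linarith
end
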